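/- Let φ : A → B be a local homomorphism of Noetherian local (commutative) rings with edim(B) ≤ edim(A), and let M be a nonzero B-module which is flat as an A-module, with either both A and B Artinian or M finitely generated as a B-module. Let n = edim(A), let x_1, …, x_n ∈ B be the images under φ of a minimal system of generators of m_A, let u_1, …, u_n be any system of n generators of m_B, and let W be any n × n matrix with entries in B such that x_i = Σ_j c_{ij} u_j for all i. Then det(W) does not belong to the ideal m_A B of B generated by φ(m_A); in particular det(W) ≠ 0. -/

import Mathlib

/-!
Put `x i = φ (g i)` and `I = m_A B = (x 1, …, x n)`. Two facts about `M` are used.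

*Independence.* By the equational criterion for flatness and the minimality of `g`, a relation
`∑ x i • m i = 0` in `M` forces every `m i` to lie in `I M`
(`mem_smul_top_of_sum_smul_eq_zero`). This property passes to `E ⊗ M`, where `E` is the exterior
algebra of `B ^ n`, because `E` is free over `B` (`LechIndependent.tensor`).

*Descent.* Let `∂` be the Koszul differential on `E` attached to `u`, that is, contraction with the
functional `v ↦ ∑ v j * u j`, and let `w i` be the `i`-th row of `W`, so that `∂ (w i) = x i`.
Suppose `w a ∧ w s ⊗ m = ∂ y + ∑ x i • y i`. Applying `∂` gives
`x a • (w s ⊗ m) - w a ∧ ∂ (w s) ⊗ m = ∑ x i • ∂ (y i)`, where `∂ (w s)` only involves the `x b`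
with `b ∈ s`. Comparing coefficients of `x a` by independence,
`w s ⊗ m ∈ im ∂ + I (E ⊗ M)` (`wedge_tail_mem`).

If `det W ∈ I`, the wedge of all rows, which is `det W` times a fixed vector, lies in `I E`.
Removing the rows one at a time gives `1 ⊗ m ∈ im ∂ + I (E ⊗ M)`, and the augmentation `E → B` turns
this into `m ∈ m_B M`, for every `m` in `M`. So `M = m_B M`, and `M = 0` by Nakayama's lemma if `M`
is finitely generated, or by nilpotency of `m_B` if `B` is Artinian.
-/

/-- The embedding dimension of a local ring: the minimal number of generators
of its maximal ideal. -/
noncomputable def edim (R : Type*) [CommRing R] [IsLocalRing R] : ℕ :=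
  sInf {n : ℕ | ∃ s : Finset R, s.card = n ∧
    Ideal.span (s : Set R) = IsLocalRing.maximalIdeal R}

open scoped TensorProduct
open CliffordAlgebra (contractLeft)

/-! ### Independence -/

/-- The elements `x i` are Lech independent on `N` with respect to the ideal `I`: every relation
among them in `N` has coefficients in `I N`. -/
def LechIndependent {B : Type*} [CommRing B] {n : ℕ} (x : Fin n → B) (I : Ideal B)
    (N : Type*) [AddCommGroup N] [Module B N] : Prop :=
  ∀ f : Fin n → N, ∑ i, x i • f i = 0 → ∀ i, f i ∈ I • (⊤ : Submodule B N)

theorem LechIndependent.tensor {B : Type*} [CommRing B] {n : ℕ} {x : Fin n → B} {I : Ideal B}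
    {M : Type*} [AddCommGroup M] [Module B M] (h : LechIndependent x I M)
    {E : Type*} [AddCommGroup E] [Module B E] {κ : Type*} (b : Module.Basis κ B E) :
    LechIndependent x I (E ⊗[B] M) := by
  classical
  intro f hf i
  let e := TensorProduct.equivFinsuppOfBasisLeft (N := M) b
  have hcoord : ∀ k, e (f i) k ∈ I • (⊤ : Submodule B M) := by
    intro k
    refine h (fun i => e (f i) k) ?_ i
    have := congrArg (fun z => e z k) hf
    simpa [Finsupp.finsetSum_apply] using this
  have hfi : f i = e.symm (e (f i)) := (e.symm_apply_apply _).symm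
  rw [hfi, TensorProduct.equivFinsuppOfBasisLeft_symm_apply]
  refine Submodule.sum_mem _ fun k _ => ?_
  have h2 := Submodule.mem_map_of_mem (f := TensorProduct.mk B E M (b k)) (hcoord k)
  rw [Submodule.map_smul''] at h2
  exact Submodule.smul_mono le_rfl le_top h2

/-- A relation among `edim A` generators of the maximal ideal has no unit coefficient: otherwise
one of the generators could be discarded. -/
theorem coeff_mem_maximalIdeal {A : Type*} [CommRing A] [IsLocalRing A]
    {n : ℕ} (hn : n = edim A) (g : Fin n → A)
    (hg : Ideal.span (Set.range g) = IsLocalRing.maximalIdeal A)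
    (a : Fin n → A) (ha : ∑ i, g i * a i = 0) (i : Fin n) :
    a i ∈ IsLocalRing.maximalIdeal A := by
  classical
  by_contra hi
  have hunit : IsUnit (a i) := by simpa using hi
  let s : Finset A := (Finset.univ.erase i).image g
  have hs : Ideal.span (s : Set A) = IsLocalRing.maximalIdeal A := by
    rw [← hg]
    refine le_antisymm (Ideal.span_mono ?_) (Ideal.span_le.2 ?_)
    · intro z hz
      obtain ⟨j, _, rfl⟩ := Finset.mem_image.1 (Finset.mem_coe.1 hz)
      exact ⟨j, rfl⟩
    · have hj : ∀ j, j ≠ i → g j ∈ Ideal.span (s : Set A) := fun j hj =>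
        Ideal.subset_span (Finset.mem_coe.2 (Finset.mem_image_of_mem g (by simp [hj])))
      rintro _ ⟨j, rfl⟩
      by_cases hji : j = i
      · subst hji
        rw [← Finset.add_sum_erase _ _ (Finset.mem_univ j)] at ha
        have : g j * a j ∈ Ideal.span (s : Set A) := by
          rw [eq_neg_of_add_eq_zero_left ha]
          refine neg_mem (Ideal.sum_mem _ fun k hk => ?_)
          exact Ideal.mul_mem_right _ _ (hj k (Finset.ne_of_mem_erase hk))
        exact (Ideal.mul_unit_mem_iff_mem _ hunit).1 this
      · exact hj j hji
  have h1 : edim A ≤ s.card := Nat.sInf_le ⟨s, rfl, hs⟩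
  have h2 : s.card ≤ n - 1 := Finset.card_image_le.trans (by simp)
  have := i.pos
  omega

theorem mem_smul_top_of_sum_smul_eq_zero {A B : Type*} [CommRing A] [CommRing B]
    [IsLocalRing A] [Algebra A B]
    {M : Type*} [AddCommGroup M] [Module B M] [Module A M] [IsScalarTower A B M]
    [Module.Flat A M] {n : ℕ} (hn : n = edim A) (g : Fin n → A)
    (hg : Ideal.span (Set.range g) = IsLocalRing.maximalIdeal A) :
    LechIndependent (fun i => algebraMap A B (g i))
      ((IsLocalRing.maximalIdeal A).map (algebraMap A B)) M := by
  intro f hf i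
  have hf' : ∑ i, g i • f i = 0 := by simpa using hf
  obtain ⟨k, a, y, hfy, ha⟩ := Module.Flat.isTrivialRelation_of_sum_smul_eq_zero hf'
  rw [hfy i]
  refine Submodule.sum_mem _ fun j _ => ?_
  rw [← algebraMap_smul B (a i j) (y j)]
  refine Submodule.smul_mem_smul (Ideal.mem_map_of_mem _ ?_) trivial
  exact coeff_mem_maximalIdeal hn g hg (fun i => a i j) (by simpa [mul_comm] using ha j) i

/-! ### The Koszul differential and wedges of rows -/

section Koszul

variable {B : Type*} [CommRing B] {n : ℕ}

/-- The functional `v ↦ ∑ v j * u j` on `B ^ n`; contraction with it is the Koszul differential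
of `u`. -/
noncomputable def koszulFunctional (u : Fin n → B) : Module.Dual B (Fin n → B) :=
  Fintype.linearCombination B u

/-- The Koszul differential of `u` on the exterior algebra of `B ^ n`. -/
noncomputable def koszulD (u : Fin n → B) :
    ExteriorAlgebra B (Fin n → B) →ₗ[B] ExteriorAlgebra B (Fin n → B) :=
  contractLeft (Q := (0 : QuadraticForm B (Fin n → B))) (koszulFunctional u)

theorem koszulD_ι_mul (u v : Fin n → B) (z : ExteriorAlgebra B (Fin n → B)) :
    koszulD u (ExteriorAlgebra.ι B v * z) =
      (∑ j, v j * u j) • z - ExteriorAlgebra.ι B v * koszulD u z := by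
  have := CliffordAlgebra.contractLeft_ι_mul (Q := (0 : QuadraticForm B (Fin n → B)))
    (d := koszulFunctional u) v z
  have hv : koszulFunctional u v = ∑ j, v j * u j := by
    simp [koszulFunctional, Fintype.linearCombination_apply]
  rw [hv] at this
  exact this

theorem koszulD_one (u : Fin n → B) : koszulD u 1 = 0 :=
  CliffordAlgebra.contractLeft_one (Q := (0 : QuadraticForm B (Fin n → B)))
    (d := koszulFunctional u)

theorem koszulD_koszulD (u : Fin n → B) (z : ExteriorAlgebra B (Fin n → B)) :
    koszulD u (koszulD u z) = 0 :=
  CliffordAlgebra.contractLeft_contractLeft (Q := (0 : QuadraticForm B (Fin n → B)))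
    (d := koszulFunctional u) z

theorem algebraMapInv_koszulD_mem (u : Fin n → B) (z : ExteriorAlgebra B (Fin n → B)) :
    ExteriorAlgebra.algebraMapInv (koszulD u z) ∈ Ideal.span (Set.range u) := by
  refine CliffordAlgebra.left_induction (Q := (0 : QuadraticForm B (Fin n → B)))
    (P := fun z => ExteriorAlgebra.algebraMapInv (koszulD u z) ∈ Ideal.span (Set.range u))
    ?_ ?_ ?_ z
  · intro r
    have : koszulD u (algebraMap B _ r) = 0 := by
      rw [Algebra.algebraMap_eq_smul_one, map_smul, koszulD_one, smul_zero]
    change ExteriorAlgebra.algebraMapInv (koszulD u (algebraMap B _ r)) ∈ _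
    rw [this, map_zero]
    exact zero_mem _
  · intro z₁ z₂ h₁ h₂
    rw [map_add, map_add]
    exact add_mem h₁ h₂
  · intro z v _
    change ExteriorAlgebra.algebraMapInv (koszulD u (ExteriorAlgebra.ι B v * z)) ∈ _
    have h0 : ExteriorAlgebra.algebraMapInv (ExteriorAlgebra.ι B v) = 0 := by
      simp [ExteriorAlgebra.algebraMapInv]
    rw [koszulD_ι_mul, map_sub, map_smul, map_mul, h0, zero_mul, sub_zero, smul_eq_mul]
    exact Ideal.mul_mem_right _ _ (Ideal.sum_mem _ fun j _ =>
      Ideal.mul_mem_left _ _ (Ideal.subset_span ⟨j, rfl⟩))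

/-- The wedge product of the rows of `W` listed in `s`, in that order. -/
noncomputable def rowWedge (W : Matrix (Fin n) (Fin n) B) (s : List (Fin n)) :
    ExteriorAlgebra B (Fin n → B) :=
  (s.map fun i => ExteriorAlgebra.ι B (W i)).prod

theorem rowWedge_cons (W : Matrix (Fin n) (Fin n) B) (a : Fin n) (s : List (Fin n)) :
    rowWedge W (a :: s) = ExteriorAlgebra.ι B (W a) * rowWedge W s := by
  simp [rowWedge]

theorem rowWedge_finRange (W : Matrix (Fin n) (Fin n) B) :
    ∃ e, rowWedge W (List.finRange n) = W.det • e := by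
  let e := ExteriorAlgebra.ιMulti B n (Pi.basisFun B (Fin n))
  have h : (ExteriorAlgebra.ιMulti B n : (Fin n → B) [⋀^Fin n]→ₗ[B] _) =
      (LinearMap.toSpanSingleton B _ e).compAlternatingMap Matrix.detRowAlternating := by
    refine Module.Basis.ext_alternating (Pi.basisFun B (Fin n)) fun i hi => ?_
    obtain ⟨σ, rfl⟩ : ∃ σ : Equiv.Perm (Fin n), i = σ :=
      ⟨Equiv.ofBijective i (Finite.injective_iff_bijective.1 hi), rfl⟩
    have h1 := AlternatingMap.map_perm (ExteriorAlgebra.ιMulti B n) (Pi.basisFun B (Fin n)) σ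
    have h2 := AlternatingMap.map_perm
      ((LinearMap.toSpanSingleton B _ e).compAlternatingMap Matrix.detRowAlternating)
      (Pi.basisFun B (Fin n)) σ
    have h3 : Matrix.detRowAlternating (R := B) (Pi.basisFun B (Fin n)) = 1 := by
      rw [← Pi.basisFun_det, Module.Basis.det_self]
    have h4 : ((LinearMap.toSpanSingleton B _ e).compAlternatingMap Matrix.detRowAlternating)
        (Pi.basisFun B (Fin n)) = e := by
      rw [LinearMap.compAlternatingMap_apply, h3]
      simp
    rw [h4] at h2
    exact h1.trans h2.symm
  refine ⟨e, ?_⟩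
  have := congrArg (fun f => f W) h
  rw [rowWedge, ← List.ofFn_eq_map]
  exact this

/-- The differential of a wedge of rows only involves the `x b` for the rows `b` that occur. -/
theorem koszulD_rowWedge (u x : Fin n → B) (W : Matrix (Fin n) (Fin n) B)
    (hW : ∀ i, x i = ∑ j, W i j * u j) (s : List (Fin n)) :
    ∃ z : Fin n → ExteriorAlgebra B (Fin n → B),
      (∀ i, i ∉ s → z i = 0) ∧ koszulD u (rowWedge W s) = ∑ i, x i • z i := by
  classical
  induction s with
  | nil => exact ⟨0, by simp, by simp [rowWedge, koszulD_one]⟩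
  | cons a s ih =>
    obtain ⟨z, hz, hd⟩ := ih
    refine ⟨fun i => (if i = a then rowWedge W s else 0) - ExteriorAlgebra.ι B (W a) * z i,
      ?_, ?_⟩
    · intro i hi
      simp only [List.mem_cons, not_or] at hi
      simp [hi.1, hz i hi.2]
    · rw [rowWedge_cons, koszulD_ι_mul, ← hW, hd]
      simp [smul_sub, Finset.sum_sub_distrib, Finset.mul_sum]

variable {M : Type*} [AddCommGroup M] [Module B M]

/-- Koszul boundaries in `E ⊗ M`, enlarged by `I (E ⊗ M)`. -/
noncomputable def boundariesMod (u : Fin n → B) (I : Ideal B) (M : Type*) [AddCommGroup M]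
    [Module B M] : Submodule B (ExteriorAlgebra B (Fin n → B) ⊗[B] M) :=
  LinearMap.range ((koszulD u).rTensor M) ⊔ I • ⊤

/-- The descent step: a row can be removed from a wedge that is a boundary modulo `I`. -/
theorem wedge_tail_mem (u x : Fin n → B) (W : Matrix (Fin n) (Fin n) B)
    (hW : ∀ i, x i = ∑ j, W i j * u j) (hx : LechIndependent x (Ideal.span (Set.range x)) M)
    (a : Fin n) (s : List (Fin n)) (ha : a ∉ s) (m : M)
    (h : rowWedge W (a :: s) ⊗ₜ[B] m ∈ boundariesMod u (Ideal.span (Set.range x)) M) :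
    rowWedge W s ⊗ₜ[B] m ∈ boundariesMod u (Ideal.span (Set.range x)) M := by
  classical
  obtain ⟨_, ⟨y, rfl⟩, t, ht, hyt⟩ := Submodule.mem_sup.1 h
  obtain ⟨c, rfl⟩ : ∃ c : Fin n → ExteriorAlgebra B (Fin n → B) ⊗[B] M,
      t = ∑ i, x i • c i := by
    refine Submodule.smul_induction_on ht ?_ ?_
    · intro r hr v _
      obtain ⟨c, rfl⟩ := (Ideal.mem_span_range_iff_exists_fun).1 hr
      exact ⟨fun i => c i • v, by simp [Finset.sum_smul, smul_smul, mul_comm]⟩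
    · rintro _ _ ⟨c, rfl⟩ ⟨c', rfl⟩
      exact ⟨c + c', by simp [smul_add, Finset.sum_add_distrib]⟩
  obtain ⟨z, hz, hd⟩ := koszulD_rowWedge u x W hW s
  have hsq : (koszulD u).rTensor M ((koszulD u).rTensor M y) = 0 := by
    rw [← LinearMap.comp_apply, ← LinearMap.rTensor_comp]
    have : koszulD u ∘ₗ koszulD u = 0 := LinearMap.ext (koszulD_koszulD u)
    simp [this]
  have key := congrArg ((koszulD u).rTensor M) hyt
  rw [map_add, hsq, zero_add, LinearMap.rTensor_tmul, rowWedge_cons, koszulD_ι_mul, ← hW, hd]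
    at key
  let f : Fin n → ExteriorAlgebra B (Fin n → B) ⊗[B] M := fun i =>
    (if i = a then rowWedge W s else 0) ⊗ₜ m - (ExteriorAlgebra.ι B (W a) * z i) ⊗ₜ m
      - (koszulD u).rTensor M (c i)
  have hf : ∑ i, x i • f i = 0 := by
    simp only [map_sum, map_smul] at key
    simp only [f, smul_sub, Finset.sum_sub_distrib, key, TensorProduct.smul_tmul',
      ← TensorProduct.sum_tmul, smul_ite, smul_zero, Finset.sum_ite_eq', Finset.mem_univ, if_true,
      ← TensorProduct.sub_tmul, Finset.mul_sum, mul_smul_comm, sub_self]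
  have hmem := hx.tensor (Module.Basis.ExteriorAlgebra (Pi.basisFun B (Fin n))) f hf a
  have hfa : f a = rowWedge W s ⊗ₜ m - (koszulD u).rTensor M (c a) := by
    simp [f, hz a ha]
  rw [hfa] at hmem
  exact Submodule.mem_sup.2 ⟨_, ⟨c a, rfl⟩, _, hmem, by abel⟩

theorem mem_smul_top_of_det_mem (u x : Fin n → B) (W : Matrix (Fin n) (Fin n) B)
    (hW : ∀ i, x i = ∑ j, W i j * u j) (hx : LechIndependent x (Ideal.span (Set.range x)) M)
    (hdet : W.det ∈ Ideal.span (Set.range x)) (m : M) :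
    m ∈ Ideal.span (Set.range u) • (⊤ : Submodule B M) := by
  have hxu : Ideal.span (Set.range x) ≤ Ideal.span (Set.range u) := by
    rw [Ideal.span_le]
    rintro _ ⟨i, rfl⟩
    rw [hW]
    exact Ideal.sum_mem _ fun j _ => Ideal.mul_mem_left _ _ (Ideal.subset_span ⟨j, rfl⟩)
  have hdesc : ∀ s : List (Fin n), s.Nodup →
      rowWedge W s ⊗ₜ[B] m ∈ boundariesMod u (Ideal.span (Set.range x)) M →
      rowWedge W [] ⊗ₜ[B] m ∈ boundariesMod u (Ideal.span (Set.range x)) M := by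
    intro s
    induction s with
    | nil => exact fun _ h => h
    | cons a s ih =>
      intro hs h
      rw [List.nodup_cons] at hs
      exact ih hs.2 (wedge_tail_mem u x W hW hx a s hs.1 m h)
  have htop : rowWedge W (List.finRange n) ⊗ₜ[B] m ∈
      boundariesMod u (Ideal.span (Set.range x)) M := by
    obtain ⟨e, he⟩ := rowWedge_finRange W
    rw [he, ← TensorProduct.smul_tmul']
    exact Submodule.mem_sup_right (Submodule.smul_mem_smul hdet trivial)
  -- The map `E ⊗ M → M` induced by the augmentation `E → B`.
  let ε : ExteriorAlgebra B (Fin n → B) ⊗[B] M →ₗ[B] M :=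
    (TensorProduct.lid B M).toLinearMap ∘ₗ
      (ExteriorAlgebra.algebraMapInv (R := B) (M := Fin n → B)).toLinearMap.rTensor M
  have hle : boundariesMod u (Ideal.span (Set.range x)) M ≤
      (Ideal.span (Set.range u) • (⊤ : Submodule B M)).comap ε := by
    refine sup_le ?_ ?_
    · rintro _ ⟨y, rfl⟩
      induction y with
      | zero => simp
      | add y₁ y₂ h₁ h₂ =>
        rw [map_add]
        exact add_mem h₁ h₂
      | tmul z m' =>
        simpa [ε] using Submodule.smul_mem_smul (algebraMapInv_koszulD_mem u z)
          (Submodule.mem_top (x := m'))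
    · rw [← Submodule.map_le_iff_le_comap, Submodule.map_smul'']
      exact Submodule.smul_mono hxu le_top
  have h1 := hle (hdesc _ (List.nodup_finRange n) htop)
  simpa [ε, rowWedge] using h1

end Koszul

theorem stmt_5 (A B : Type*) [CommRing A] [CommRing B]
    [IsLocalRing A] [IsLocalRing B] [IsNoetherianRing A] [IsNoetherianRing B]
    [Algebra A B] (hloc : IsLocalHom (algebraMap A B))
    (hedim : edim B ≤ edim A)
    (M : Type*) [AddCommGroup M] [Module B M] [Module A M] [IsScalarTower A B M]
    (hM : Nontrivial M) (hflat : Module.Flat A M)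
    (hcase : (IsArtinianRing A ∧ IsArtinianRing B) ∨ Module.Finite B M)
    (n : ℕ) (hn : n = edim A)
    (g : Fin n → A) (hg : Ideal.span (Set.range g) = IsLocalRing.maximalIdeal A)
    (u : Fin n → B) (hu : Ideal.span (Set.range u) = IsLocalRing.maximalIdeal B)
    (W : Matrix (Fin n) (Fin n) B)
    (hW : ∀ i, algebraMap A B (g i) = ∑ j, W i j * u j) :
    W.det ∉ (IsLocalRing.maximalIdeal A).map (algebraMap A B) ∧ W.det ≠ 0 := by
  have hmain : W.det ∉ (IsLocalRing.maximalIdeal A).map (algebraMap A B) := by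
    intro hdet
    have hI : (IsLocalRing.maximalIdeal A).map (algebraMap A B) =
        Ideal.span (Set.range fun i => algebraMap A B (g i)) := by
      rw [← hg, Ideal.map_span, ← Set.range_comp]
      rfl
    have hx := mem_smul_top_of_sum_smul_eq_zero (B := B) (M := M) hn g hg
    rw [hI] at hx hdet
    have htop : (⊤ : Submodule B M) = IsLocalRing.maximalIdeal B • (⊤ : Submodule B M) := by
      refine (eq_top_iff.2 fun m _ => ?_).symm
      rw [← hu]
      exact mem_smul_top_of_det_mem u _ W hW hx hdet m
    have hbot : (⊤ : Submodule B M) = ⊥ := by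
      rcases hcase with ⟨_, hB⟩ | hfin
      · have hnil : IsNilpotent (IsLocalRing.maximalIdeal B) := by
          rw [← IsLocalRing.jacobson_eq_maximalIdeal (⊥ : Ideal B) bot_ne_top]
          exact IsArtinianRing.isNilpotent_jacobson_bot
        obtain ⟨k, hk⟩ := hnil
        have hpow : ∀ k : ℕ, (⊤ : Submodule B M) = IsLocalRing.maximalIdeal B ^ k • ⊤ := by
          intro k
          induction k with
          | zero => simp
          | succ k ih => rw [pow_succ, Submodule.mul_smul, ← htop, ← ih]
        rw [hpow k, hk]
        simp
      · exact Submodule.eq_bot_of_le_smul_of_le_jacobson_bot _ _ hfin.fg_top htop.le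
          (IsLocalRing.maximalIdeal_le_jacobson _)
    exact top_ne_bot hbot
  exact ⟨hmain, fun h => hmain (h ▸ zero_mem _)⟩
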